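/- Let c_k > 0, c_j > 0, ρ ∈ (−1, 1), and T be real, and set T_k = T/√(c_k), T_j = T/√(c_j). Let p(x, y) = (1/(2π√(c_k c_j (1−ρ²))))·exp(−(x²/c_k − 2ρxy/√(c_k c_j) + y²/c_j)/(2(1−ρ²))) be the centered bivariate Gaussian density with variances c_k, c_j and correlation ρ, and let f_ρ denote the standard bivariate Gaussian density with correlation ρ. Then ∫_T^∞ ∫_T^∞ x·y·p(x, y) dy dx = √(c_k c_j) · [ ρ·( T_k·φ(T_k)·(1 − Φ(A)) + T_j·φ(T_j)·(1 − Φ(B)) + Ω ) + (1 − ρ²)·f_ρ(T_k, T_j) ], where A = (T_j − ρT_k)/√(1−ρ²), B = (T_k − ρT_j)/√(1−ρ²), Ω = ∫_{T_k}^∞ ∫_{T_j}^∞ f_ρ(z₁, z₂) dz₂ dz₁, φ(z) = (1/√(2π))·exp(−z²/2) and Φ(z) = ∫_{−∞}^z φ(t) dt. -/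

import Mathlib

open Real

/-- The standard Gaussian probability density function. -/
noncomputable def stdGaussPDF (z : ℝ) : ℝ :=
  (1 / Real.sqrt (2 * Real.pi)) * Real.exp (-z ^ 2 / 2)

/-- The standard Gaussian cumulative distribution function. -/
noncomputable def stdGaussCDF (z : ℝ) : ℝ :=
  ∫ t in Set.Iic z, stdGaussPDF t

/-- The standard bivariate Gaussian density with correlation `ρ`. -/
noncomputable def bivGaussPDF (ρ z₁ z₂ : ℝ) : ℝ :=
  (1 / (2 * Real.pi * Real.sqrt (1 - ρ ^ 2))) *
    Real.exp (-(z₁ ^ 2 - 2 * ρ * z₁ * z₂ + z₂ ^ 2) / (2 * (1 - ρ ^ 2)))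

/-!
Let `f` be the standard bivariate density, `φ` and `Φ` the standard normal density and distribution
function, and `g_b(x) = ∫_{y > b} f(x, y) dy = φ(x) (1 - Φ((b - ρ x) / √(1 - ρ²)))`. Two first-order
identities carry the proof:

* `(y - ρ x) f = -(1 - ρ²) ∂_y f`, so `∫_{y > b} y f(x, y) dy = ρ x g_b(x) + (1 - ρ²) f(x, b)`;
* `g_b'(x) = -x g_b(x) + ρ f(x, b)`, so `x² g_b = g_b + ρ x f(x, b) - (x g_b)'`.

Multiplying the first by `x`, integrating over `x > a` and inserting the second leaves
`ρ (a g_b(a) + ∫_{x > a} g_b) + ∫_{x > a} x f(x, b) dx`, and the last integral is again given by the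
first identity because `f` is symmetric. The variances are scaled out by `x = √ck u`, `y = √cj v`.
-/

open MeasureTheory Filter Topology ProbabilityTheory

section ImproperIntegrals

variable {E : Type*} [NormedAddCommGroup E] [NormedSpace ℝ E]

lemma integral_Ioi_eq_neg_of_hasDerivAt_of_integrableOn [CompleteSpace E] {f f' : ℝ → E} {a : ℝ}
    (hderiv : ∀ x ∈ Set.Ici a, HasDerivAt f (f' x) x)
    (hf' : IntegrableOn f' (Set.Ioi a)) (hf : IntegrableOn f (Set.Ioi a)) :
    ∫ x in Set.Ioi a, f' x = -f a := by
  have hlim : Tendsto f atTop (𝓝 0) :=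
    tendsto_zero_of_hasDerivAt_of_integrableOn_Ioi
      (fun x hx => hderiv x (Set.Ioi_subset_Ici_self hx)) hf' hf
  rw [integral_Ioi_of_hasDerivAt_of_tendsto' hderiv hf' hlim, zero_sub]

lemma hasDerivAt_integral_Iic [CompleteSpace E] {f : ℝ → E} (hf : Integrable f)
    (hcont : Continuous f) (x : ℝ) : HasDerivAt (fun x => ∫ t in Set.Iic x, f t) (f x) x := by
  have hsplit : (fun x => ∫ t in Set.Iic x, f t) =
      fun x => (∫ t in (0 : ℝ)..x, f t) + ∫ t in Set.Iic (0 : ℝ), f t := by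
    funext x
    rw [← intervalIntegral.integral_Iic_sub_Iic hf.integrableOn hf.integrableOn, sub_add_cancel]
  rw [hsplit]
  exact (hcont.integral_hasStrictDerivAt 0 x).hasDerivAt.add_const _

lemma integral_Ioi_integral_Ioi_comp_mul_left (g : ℝ → ℝ → E) (a b : ℝ) {r s : ℝ}
    (hr : 0 < r) (hs : 0 < s) :
    ∫ x in Set.Ioi (r * a), ∫ y in Set.Ioi (s * b), g x y =
      (r * s) • ∫ u in Set.Ioi a, ∫ v in Set.Ioi b, g (r * u) (s * v) := by
  simp only [← integral_comp_mul_left_Ioi' _ _ hr, ← integral_comp_mul_left_Ioi' _ _ hs,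
    integral_smul, mul_smul]

end ImproperIntegrals

section Univariate

lemma stdGaussPDF_eq_gaussianPDFReal : stdGaussPDF = gaussianPDFReal 0 1 := by
  funext z
  simp [stdGaussPDF, gaussianPDFReal]

lemma continuous_stdGaussPDF : Continuous stdGaussPDF := by
  unfold stdGaussPDF
  fun_prop

lemma integrable_pow_mul_stdGaussPDF (n : ℕ) : Integrable fun z => z ^ n * stdGaussPDF z := by
  have hn : (-1 : ℝ) < n := neg_one_lt_zero.trans_le n.cast_nonneg
  refine ((integrable_rpow_mul_exp_neg_mul_sq one_half_pos hn).const_mul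
    (1 / √(2 * π))).congr (ae_of_all _ fun z => ?_)
  simp only [Real.rpow_natCast, stdGaussPDF]
  ring_nf

lemma integrable_stdGaussPDF : Integrable stdGaussPDF := by
  simpa using integrable_pow_mul_stdGaussPDF 0

lemma hasDerivAt_stdGaussPDF (z : ℝ) : HasDerivAt stdGaussPDF (-z * stdGaussPDF z) z := by
  have hexponent : HasDerivAt (fun z : ℝ => -z ^ 2 / 2) (-z) z :=
    ((hasDerivAt_pow 2 z).neg.div_const 2).congr_deriv (by push_cast; ring)
  refine (hexponent.exp.const_mul (1 / √(2 * π))).congr_deriv ?_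
  unfold stdGaussPDF
  ring

lemma stdGaussCDF_eq_cdf : stdGaussCDF = cdf (gaussianReal 0 1) := by
  funext z
  rw [cdf_eq_real, Measure.real, gaussianReal_apply_eq_integral 0 one_ne_zero,
    ENNReal.toReal_ofReal (integral_nonneg (gaussianPDFReal_nonneg 0 1)), stdGaussCDF,
    stdGaussPDF_eq_gaussianPDFReal]

lemma hasDerivAt_stdGaussCDF (z : ℝ) : HasDerivAt stdGaussCDF (stdGaussPDF z) z :=
  hasDerivAt_integral_Iic integrable_stdGaussPDF continuous_stdGaussPDF z

lemma continuous_stdGaussCDF : Continuous stdGaussCDF :=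
  continuous_iff_continuousAt.2 fun z => (hasDerivAt_stdGaussCDF z).continuousAt

lemma tendsto_stdGaussCDF_atTop : Tendsto stdGaussCDF atTop (𝓝 1) := by
  rw [stdGaussCDF_eq_cdf]
  exact tendsto_cdf_atTop (gaussianReal 0 1)

lemma norm_one_sub_stdGaussCDF_le_one (z : ℝ) : ‖1 - stdGaussCDF z‖ ≤ 1 := by
  rw [stdGaussCDF_eq_cdf, Real.norm_eq_abs, abs_le]
  constructor <;> linarith [cdf_nonneg (gaussianReal 0 1) z, cdf_le_one (gaussianReal 0 1) z]

end Univariate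

section BivariateDensity

variable {ρ : ℝ}

lemma bivGaussPDF_comm (ρ x y : ℝ) : bivGaussPDF ρ x y = bivGaussPDF ρ y x := by
  unfold bivGaussPDF
  ring_nf

lemma bivGaussPDF_eq_marginal_mul_conditional (hρ : 0 < 1 - ρ ^ 2) (x y : ℝ) :
    bivGaussPDF ρ x y =
      stdGaussPDF x * (stdGaussPDF ((y - ρ * x) / √(1 - ρ ^ 2)) / √(1 - ρ ^ 2)) := by
  have hexponent : -(x ^ 2 - 2 * ρ * x * y + y ^ 2) / (2 * (1 - ρ ^ 2)) =
      -x ^ 2 / 2 + -((y - ρ * x) / √(1 - ρ ^ 2)) ^ 2 / 2 := by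
    rw [div_pow, Real.sq_sqrt hρ.le]
    field_simp
    ring
  have hconst : 2 * π = √(2 * π) * √(2 * π) := (Real.mul_self_sqrt (by positivity)).symm
  rw [bivGaussPDF, hexponent, Real.exp_add, hconst]
  unfold stdGaussPDF
  ring

lemma hasDerivAt_bivGaussPDF_right (hρ : 0 < 1 - ρ ^ 2) (x y : ℝ) :
    HasDerivAt (bivGaussPDF ρ x) (-((y - ρ * x) / (1 - ρ ^ 2)) * bivGaussPDF ρ x y) y := by
  have hexponent : HasDerivAt
      (fun y => -(x ^ 2 - 2 * ρ * x * y + y ^ 2) / (2 * (1 - ρ ^ 2)))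
      (-((y - ρ * x) / (1 - ρ ^ 2))) y := by
    refine (((((hasDerivAt_id y).const_mul (2 * ρ * x)).const_sub (x ^ 2)).add
      (hasDerivAt_pow 2 y)).neg.div_const _).congr_deriv ?_
    field_simp
    push_cast
    ring
  refine (hexponent.exp.const_mul _).congr_deriv ?_
  unfold bivGaussPDF
  ring

lemma integrable_bivGaussPDF_right (hρ : 0 < 1 - ρ ^ 2) (x : ℝ) :
    Integrable (bivGaussPDF ρ x) := by
  rw [funext (bivGaussPDF_eq_marginal_mul_conditional hρ x)]
  exact (((integrable_stdGaussPDF.comp_div (Real.sqrt_pos.2 hρ).ne').comp_sub_right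
    (ρ * x)).div_const _).const_mul _

lemma integrable_sub_mul_bivGaussPDF_right (hρ : 0 < 1 - ρ ^ 2) (x : ℝ) :
    Integrable fun y => (y - ρ * x) * bivGaussPDF ρ x y := by
  have hs := (Real.sqrt_pos.2 hρ).ne'
  have hresidual : Integrable fun z => z * stdGaussPDF z := by
    simpa using integrable_pow_mul_stdGaussPDF 1
  refine (((hresidual.comp_div hs).comp_sub_right (ρ * x)).const_mul
    (stdGaussPDF x)).congr (ae_of_all _ fun y => ?_)
  simp only [bivGaussPDF_eq_marginal_mul_conditional hρ]
  ring

lemma integrable_mul_bivGaussPDF_right (hρ : 0 < 1 - ρ ^ 2) (x : ℝ) :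
    Integrable fun y => y * bivGaussPDF ρ x y := by
  refine ((integrable_sub_mul_bivGaussPDF_right hρ x).add
    ((integrable_bivGaussPDF_right hρ x).const_mul (ρ * x))).congr (ae_of_all _ fun y => ?_)
  simp only [Pi.add_apply]
  ring

lemma integrable_mul_bivGaussPDF_left (hρ : 0 < 1 - ρ ^ 2) (y : ℝ) :
    Integrable fun x => x * bivGaussPDF ρ x y := by
  simpa only [bivGaussPDF_comm ρ y] using integrable_mul_bivGaussPDF_right hρ y

lemma integral_Ioi_sub_mul_bivGaussPDF_right (hρ : 0 < 1 - ρ ^ 2) (x b : ℝ) :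
    ∫ y in Set.Ioi b, (y - ρ * x) * bivGaussPDF ρ x y = (1 - ρ ^ 2) * bivGaussPDF ρ x b := by
  have hderiv (y : ℝ) : HasDerivAt (fun y => -(1 - ρ ^ 2) * bivGaussPDF ρ x y)
      ((y - ρ * x) * bivGaussPDF ρ x y) y :=
    ((hasDerivAt_bivGaussPDF_right hρ x y).const_mul _).congr_deriv (by field_simp)
  rw [integral_Ioi_eq_neg_of_hasDerivAt_of_integrableOn (fun y _ => hderiv y)
    (integrable_sub_mul_bivGaussPDF_right hρ x).integrableOn
    ((integrable_bivGaussPDF_right hρ x).const_mul _).integrableOn]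
  ring

end BivariateDensity

/-- The density `x ↦ φ(x) (1 - Φ((b - ρ x) / √(1 - ρ²)))` of the first coordinate of a standard
bivariate Gaussian pair restricted to the event that the second coordinate exceeds `b`; it is not
normalized by the probability of that event. -/
noncomputable def bivGaussTailPDF (ρ b x : ℝ) : ℝ :=
  stdGaussPDF x * (1 - stdGaussCDF ((b - ρ * x) / √(1 - ρ ^ 2)))

section TailDensity

variable {ρ : ℝ}

lemma integral_Ioi_bivGaussPDF_right (hρ : 0 < 1 - ρ ^ 2) (x b : ℝ) :
    ∫ y in Set.Ioi b, bivGaussPDF ρ x y = bivGaussTailPDF ρ b x := by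
  have hderiv (y : ℝ) :
      HasDerivAt (fun y => stdGaussPDF x * stdGaussCDF ((y - ρ * x) / √(1 - ρ ^ 2)))
        (bivGaussPDF ρ x y) y := by
    refine (((hasDerivAt_stdGaussCDF _).comp y
      (((hasDerivAt_id' y).sub_const (ρ * x)).div_const _)).const_mul _).congr_deriv ?_
    rw [bivGaussPDF_eq_marginal_mul_conditional hρ]
    ring
  have hresidual : Tendsto (fun y => (y - ρ * x) / √(1 - ρ ^ 2)) atTop atTop :=
    (tendsto_atTop_add_const_right _ (-(ρ * x)) tendsto_id).atTop_div_const (Real.sqrt_pos.2 hρ)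
  rw [integral_Ioi_of_hasDerivAt_of_tendsto' (fun y _ => hderiv y)
    (integrable_bivGaussPDF_right hρ x).integrableOn
    ((tendsto_stdGaussCDF_atTop.comp hresidual).const_mul _), bivGaussTailPDF]
  ring

lemma integral_Ioi_mul_bivGaussPDF_right (hρ : 0 < 1 - ρ ^ 2) (x b : ℝ) :
    ∫ y in Set.Ioi b, y * bivGaussPDF ρ x y =
      ρ * (x * bivGaussTailPDF ρ b x) + (1 - ρ ^ 2) * bivGaussPDF ρ x b := by
  have hsplit (y : ℝ) : y * bivGaussPDF ρ x y =
      ρ * x * bivGaussPDF ρ x y + (y - ρ * x) * bivGaussPDF ρ x y := by ring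
  simp only [hsplit]
  rw [integral_add ((integrable_bivGaussPDF_right hρ x).const_mul _).integrableOn
      (integrable_sub_mul_bivGaussPDF_right hρ x).integrableOn,
    integral_const_mul, integral_Ioi_bivGaussPDF_right hρ,
    integral_Ioi_sub_mul_bivGaussPDF_right hρ, mul_assoc]

lemma integrable_pow_mul_bivGaussTailPDF (ρ b : ℝ) (n : ℕ) :
    Integrable fun x => x ^ n * bivGaussTailPDF ρ b x := by
  have hcont : Continuous fun x => 1 - stdGaussCDF ((b - ρ * x) / √(1 - ρ ^ 2)) :=
    continuous_const.sub (continuous_stdGaussCDF.comp (by fun_prop))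
  simpa only [bivGaussTailPDF, mul_assoc] using
    (integrable_pow_mul_stdGaussPDF n).mul_bdd hcont.aestronglyMeasurable
      (ae_of_all _ fun x => norm_one_sub_stdGaussCDF_le_one _)

lemma hasDerivAt_bivGaussTailPDF (hρ : 0 < 1 - ρ ^ 2) (b x : ℝ) :
    HasDerivAt (bivGaussTailPDF ρ b)
      (-x * bivGaussTailPDF ρ b x + ρ * bivGaussPDF ρ x b) x := by
  have hresidual : HasDerivAt (fun x => (b - ρ * x) / √(1 - ρ ^ 2)) (-ρ / √(1 - ρ ^ 2)) x := by
    simpa using (((hasDerivAt_id x).const_mul ρ).const_sub b).div_const (√(1 - ρ ^ 2))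
  refine ((hasDerivAt_stdGaussPDF x).mul
    (((hasDerivAt_stdGaussCDF _).comp x hresidual).const_sub 1)).congr_deriv ?_
  rw [bivGaussPDF_eq_marginal_mul_conditional hρ, bivGaussTailPDF]
  simp only [Function.comp]
  ring

lemma integral_Ioi_sq_mul_bivGaussTailPDF (hρ : 0 < 1 - ρ ^ 2) (a b : ℝ) :
    ∫ x in Set.Ioi a, x ^ 2 * bivGaussTailPDF ρ b x =
      a * bivGaussTailPDF ρ b a + (∫ x in Set.Ioi a, bivGaussTailPDF ρ b x)
        + ρ * ∫ x in Set.Ioi a, x * bivGaussPDF ρ x b := by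
  have hint0 : Integrable (bivGaussTailPDF ρ b) := by
    simpa using integrable_pow_mul_bivGaussTailPDF ρ b 0
  have hint1 : Integrable fun x => x * bivGaussTailPDF ρ b x := by
    simpa using integrable_pow_mul_bivGaussTailPDF ρ b 1
  have hint2 := integrable_pow_mul_bivGaussTailPDF ρ b 2
  have hslice : Integrable fun x => ρ * (x * bivGaussPDF ρ x b) :=
    (integrable_mul_bivGaussPDF_left hρ b).const_mul ρ
  have hsum : Integrable fun x => bivGaussTailPDF ρ b x + ρ * (x * bivGaussPDF ρ x b) :=
    hint0.add hslice
  have hderiv (x : ℝ) : HasDerivAt (fun x => x * bivGaussTailPDF ρ b x)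
      (bivGaussTailPDF ρ b x + ρ * (x * bivGaussPDF ρ x b) - x ^ 2 * bivGaussTailPDF ρ b x) x :=
    ((hasDerivAt_id' x).mul (hasDerivAt_bivGaussTailPDF hρ b x)).congr_deriv (by ring)
  have hparts := integral_Ioi_eq_neg_of_hasDerivAt_of_integrableOn (a := a)
    (fun x _ => hderiv x) (hsum.sub hint2).integrableOn hint1.integrableOn
  rw [integral_sub hsum.integrableOn hint2.integrableOn,
    integral_add hint0.integrableOn hslice.integrableOn, integral_const_mul] at hparts
  linarith

lemma integral_Ioi_integral_Ioi_mul_bivGaussPDF (hρ : 0 < 1 - ρ ^ 2) (a b : ℝ) :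
    ∫ x in Set.Ioi a, ∫ y in Set.Ioi b, x * y * bivGaussPDF ρ x y =
      ρ * (a * bivGaussTailPDF ρ b a + b * bivGaussTailPDF ρ a b
          + ∫ x in Set.Ioi a, ∫ y in Set.Ioi b, bivGaussPDF ρ x y)
        + (1 - ρ ^ 2) * bivGaussPDF ρ a b := by
  have hinner (x : ℝ) : ∫ y in Set.Ioi b, x * y * bivGaussPDF ρ x y =
      ρ * (x ^ 2 * bivGaussTailPDF ρ b x) + (1 - ρ ^ 2) * (x * bivGaussPDF ρ x b) := by
    simp only [mul_assoc x]
    rw [integral_const_mul, integral_Ioi_mul_bivGaussPDF_right hρ]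
    ring
  have hslice : ∫ x in Set.Ioi a, x * bivGaussPDF ρ x b =
      ρ * (b * bivGaussTailPDF ρ a b) + (1 - ρ ^ 2) * bivGaussPDF ρ a b := by
    simpa only [bivGaussPDF_comm ρ b] using integral_Ioi_mul_bivGaussPDF_right hρ b a
  simp only [hinner, integral_Ioi_bivGaussPDF_right hρ]
  rw [integral_add ((integrable_pow_mul_bivGaussTailPDF ρ b 2).const_mul ρ).integrableOn
      ((integrable_mul_bivGaussPDF_left hρ b).const_mul _).integrableOn,
    integral_const_mul, integral_const_mul, integral_Ioi_sq_mul_bivGaussTailPDF hρ, hslice]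
  ring

end TailDensity

/-- The centered bivariate Gaussian density with variances `ck`, `cj` and correlation `ρ`, i.e. the
density `p` of a pair of field values, before the activation threshold is applied. -/
noncomputable def centeredBivGaussPDF (ck cj ρ x y : ℝ) : ℝ :=
  (1 / (2 * π * √(ck * cj * (1 - ρ ^ 2)))) *
    Real.exp (-(x ^ 2 / ck - 2 * ρ * x * y / √(ck * cj) + y ^ 2 / cj) / (2 * (1 - ρ ^ 2)))

lemma centeredBivGaussPDF_sqrt_mul {ck cj : ℝ} (hck : 0 < ck) (hcj : 0 < cj) (ρ u v : ℝ) :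
    centeredBivGaussPDF ck cj ρ (√ck * u) (√cj * v) = bivGaussPDF ρ u v / (√ck * √cj) := by
  have hquad : (√ck * u) ^ 2 / ck - 2 * ρ * (√ck * u) * (√cj * v) / √(ck * cj)
      + (√cj * v) ^ 2 / cj = u ^ 2 - 2 * ρ * u * v + v ^ 2 := by
    rw [mul_pow, mul_pow, Real.sq_sqrt hck.le, Real.sq_sqrt hcj.le, Real.sqrt_mul hck.le]
    field_simp
  rw [centeredBivGaussPDF, hquad, bivGaussPDF, Real.sqrt_mul (mul_pos hck hcj).le,
    Real.sqrt_mul hck.le]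
  field_simp

theorem bivariate_gaussian_truncated_cross_moment_scaled_general
    {ck cj ρ : ℝ} (hck : 0 < ck) (hcj : 0 < cj) (hρ : ρ ∈ Set.Ioo (-1 : ℝ) 1)
    {S T Tk Tj : ℝ} (hTk : Tk = S / √ck) (hTj : Tj = T / √cj) :
    ∫ x in Set.Ioi S, ∫ y in Set.Ioi T, x * y * centeredBivGaussPDF ck cj ρ x y =
      √(ck * cj) *
        (ρ * (Tk * stdGaussPDF Tk * (1 - stdGaussCDF ((Tj - ρ * Tk) / √(1 - ρ ^ 2)))
            + Tj * stdGaussPDF Tj * (1 - stdGaussCDF ((Tk - ρ * Tj) / √(1 - ρ ^ 2)))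
            + ∫ z₁ in Set.Ioi Tk, ∫ z₂ in Set.Ioi Tj, bivGaussPDF ρ z₁ z₂)
          + (1 - ρ ^ 2) * bivGaussPDF ρ Tk Tj) := by
  have hvar : 0 < 1 - ρ ^ 2 := by nlinarith [hρ.1, hρ.2]
  have hσk : 0 < √ck := Real.sqrt_pos.2 hck
  have hσj : 0 < √cj := Real.sqrt_pos.2 hcj
  obtain rfl : S = √ck * Tk := by rw [hTk, mul_div_cancel₀ _ hσk.ne']
  obtain rfl : T = √cj * Tj := by rw [hTj, mul_div_cancel₀ _ hσj.ne']
  have hcross (u v : ℝ) :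
      √ck * u * (√cj * v) * centeredBivGaussPDF ck cj ρ (√ck * u) (√cj * v) =
        u * v * bivGaussPDF ρ u v := by
    rw [centeredBivGaussPDF_sqrt_mul hck hcj]
    field_simp
  rw [integral_Ioi_integral_Ioi_comp_mul_left _ _ _ hσk hσj]
  simp only [hcross]
  rw [integral_Ioi_integral_Ioi_mul_bivGaussPDF hvar, smul_eq_mul, Real.sqrt_mul hck.le,
    bivGaussTailPDF, bivGaussTailPDF, mul_assoc Tk, mul_assoc Tj]

/-- Lemma 7 of the paper: the doubly-truncated cross moment of a centered bivariate
Gaussian with variances `c_k, c_j > 0` and correlation `ρ ∈ (−1,1)`, both components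
truncated at the activation threshold `T`. -/
theorem bivariate_gaussian_truncated_cross_moment_scaled
    (ck cj ρ T : ℝ) (hck : 0 < ck) (hcj : 0 < cj) (hρ : ρ ∈ Set.Ioo (-1 : ℝ) 1)
    (Tk Tj : ℝ) (hTk : Tk = T / Real.sqrt ck) (hTj : Tj = T / Real.sqrt cj)
    (p : ℝ → ℝ → ℝ)
    (hp : ∀ x y, p x y = (1 / (2 * Real.pi * Real.sqrt (ck * cj * (1 - ρ ^ 2)))) *
        Real.exp (-(x ^ 2 / ck - 2 * ρ * x * y / Real.sqrt (ck * cj) + y ^ 2 / cj) /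
          (2 * (1 - ρ ^ 2))))
    (A B Omega : ℝ)
    (hA : A = (Tj - ρ * Tk) / Real.sqrt (1 - ρ ^ 2))
    (hB : B = (Tk - ρ * Tj) / Real.sqrt (1 - ρ ^ 2))
    (hOmega : Omega = ∫ z₁ in Set.Ioi Tk, ∫ z₂ in Set.Ioi Tj, bivGaussPDF ρ z₁ z₂) :
    (∫ x in Set.Ioi T, ∫ y in Set.Ioi T, x * y * p x y)
      = Real.sqrt (ck * cj) *
          (ρ * (Tk * stdGaussPDF Tk * (1 - stdGaussCDF A)
              + Tj * stdGaussPDF Tj * (1 - stdGaussCDF B) + Omega)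
            + (1 - ρ ^ 2) * bivGaussPDF ρ Tk Tj) := by
  obtain rfl : p = centeredBivGaussPDF ck cj ρ := funext₂ hp
  simpa only [hA, hB, hOmega] using
    bivariate_gaussian_truncated_cross_moment_scaled_general hck hcj hρ hTk hTj
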